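/- (Theorem 10, convergence of minimum risks to the Bayes error.) Let p and q be probability density functions on ℝ. Then the minimum risks R_n = ∫_{{p+q>0}} ((p(x)+q(x))/2) · C_{Poly-n}( p(x)/(p(x)+q(x)) ) dx satisfy R_n ≥ R_{n+1} ≥ (1/2)·∫_ℝ min(p(x), q(x)) dx for all n ≥ 0, and lim_{n→∞} R_n = (1/2)·∫_ℝ min(p(x), q(x)) dx, the Bayes error of the binary classification problem with class-conditional densities p, q and equal priors. -/

import Mathlib

/-!
For `η ∈ [0,1/2]`, integration by parts gives
`C_{Poly-n}(η) = (1/2) · ∫₀^{1/2} min(t,η) wⁿ dt / ∫₀^{1/2} t wⁿ dt` with `w = t(1-t)`, and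
`C_{Poly-n}` is symmetric about `1/2` (`CPoly_eq`). Thus `2 C_{Poly-n}(η)` is the mean of the
decreasing function `min(t,η)/t` under the probability density proportional to `t wⁿ` on
`[0,1/2]`. That function takes values in `[2η, 1]`, so `min(η,1-η) ≤ C_{Poly-n}(η) ≤ 1/2`. As
`w` is increasing on `[0,1/2]`, raising `n` shifts mass to the right and lowers the mean
(`momPoly_succ_le`); as `n → ∞` the mass concentrates at `t = 1/2`, so the mean tends to `2η`
(`momPoly_ratio_tendsto`). Since `(p+q) · min(η,1-η) = min(p,q)` at `η = p/(p+q)`, integrating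
these pointwise facts, with dominated convergence for the limit, gives the statement for the risks.
-/

open Set MeasureTheory

/-- `Q_n(η) = −∫₀^η (t(1−t))ⁿ dt`. -/
noncomputable def Qpoly (n : ℕ) (η : ℝ) : ℝ := -∫ t in (0:ℝ)..η, (t * (1 - t))^n

/-- `K1_n = −Q_n(1/2)`. -/
noncomputable def K1poly (n : ℕ) : ℝ := -Qpoly n (1/2)

/-- `F_n(η) = ∫₀^η Q_n(s) ds + K1_n·η`. -/
noncomputable def Fpoly (n : ℕ) (η : ℝ) : ℝ := (∫ s in (0:ℝ)..η, Qpoly n s) + K1poly n * η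

/-- `K2_n = (1/2)/F_n(1/2)`. -/
noncomputable def K2poly (n : ℕ) : ℝ := (1/2) / Fpoly n (1/2)

/-- The polynomial minimum conditional risk function `C_{Poly-n}(η) = K2_n·F_n(η)`. -/
noncomputable def CPoly (n : ℕ) (η : ℝ) : ℝ := K2poly n * Fpoly n η

/-- For `0 ≤ η ≤ 1/2`, the value `F_n(η)` as a moment of the weight `(t(1-t))ⁿ` on `[0,1/2]`. -/
noncomputable def momPoly (n : ℕ) (η : ℝ) : ℝ :=
  ∫ t in (0:ℝ)..(1/2), min t η * (t * (1 - t))^n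

lemma hasDerivAt_Qpoly (n : ℕ) (s : ℝ) : HasDerivAt (Qpoly n) (-(s * (1 - s))^n) s := by
  have hc : Continuous fun t : ℝ => (t * (1 - t))^n := by fun_prop
  exact (intervalIntegral.integral_hasDerivAt_right (hc.intervalIntegrable _ _)
    hc.aestronglyMeasurable.stronglyMeasurableAtFilter hc.continuousAt).neg

lemma continuous_Qpoly (n : ℕ) : Continuous (Qpoly n) :=
  continuous_iff_continuousAt.2 fun s => (hasDerivAt_Qpoly n s).continuousAt

lemma continuous_Fpoly (n : ℕ) : Continuous (Fpoly n) := by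
  have h : Continuous fun η : ℝ => ∫ s in (0:ℝ)..η, Qpoly n s :=
    intervalIntegral.continuous_primitive
      (fun a b => (continuous_Qpoly n).intervalIntegrable a b) 0
  unfold Fpoly
  fun_prop

lemma continuous_CPoly (n : ℕ) : Continuous (CPoly n) := by
  have := continuous_Fpoly n
  unfold CPoly
  fun_prop

/-- Integration by parts, using `Q_n' = -(t(1-t))ⁿ`. -/
lemma Fpoly_eq_momPoly (n : ℕ) {η : ℝ} (h0 : 0 ≤ η) (h1 : η ≤ 1/2) :
    Fpoly n η = momPoly n η := by
  have hc : Continuous fun t : ℝ => (t * (1 - t))^n := by fun_prop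
  have hm : Continuous fun t : ℝ => min t η * (t * (1 - t))^n := by fun_prop
  have parts := intervalIntegral.integral_mul_deriv_eq_deriv_mul (a := 0) (b := η)
    (u := Qpoly n) (v := fun s => s) (u' := fun s => -(s * (1 - s))^n) (v' := fun _ => 1)
    (fun s _ => hasDerivAt_Qpoly n s) (fun s _ => hasDerivAt_id s)
    ((hc.neg).intervalIntegrable _ _) (continuous_const.intervalIntegrable _ _)
  have split := intervalIntegral.integral_add_adjacent_intervals
    (hm.intervalIntegrable 0 η (μ := volume)) (hm.intervalIntegrable η (1/2))
  have e1 : ∫ t in (0:ℝ)..η, min t η * (t * (1 - t))^n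
      = ∫ t in (0:ℝ)..η, t * (t * (1 - t))^n := by
    refine intervalIntegral.integral_congr fun t ht => ?_
    rw [uIcc_of_le h0] at ht
    simp only [min_eq_left ht.2]
  have e2 : ∫ t in η..(1/2), min t η * (t * (1 - t))^n
      = η * ∫ t in η..(1/2), (t * (1 - t))^n := by
    rw [← intervalIntegral.integral_const_mul]
    refine intervalIntegral.integral_congr fun t ht => ?_
    rw [uIcc_of_le h1] at ht
    simp only [min_eq_right ht.1]
  have e3 := intervalIntegral.integral_add_adjacent_intervals
    (hc.intervalIntegrable 0 η (μ := volume)) (hc.intervalIntegrable η (1/2))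
  have e4 : ∫ t in (0:ℝ)..η, -(t * (1 - t))^n * t
      = -∫ t in (0:ℝ)..η, t * (t * (1 - t))^n := by
    rw [← intervalIntegral.integral_neg]
    congr 1
    ext t
    ring
  simp only [mul_one] at parts
  rw [e4] at parts
  unfold Fpoly K1poly momPoly
  rw [parts, ← split, e1, e2]
  unfold Qpoly
  rw [← e3]
  ring

/-- `F_n' = Q_n + K1_n` is odd about `1/2`, so `F_n` is even about `1/2`. -/
lemma Fpoly_symm (n : ℕ) (η : ℝ) : Fpoly n (1 - η) = Fpoly n η := by
  have hc : Continuous fun t : ℝ => (t * (1 - t))^n := by fun_prop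
  have hg : Continuous fun s => Qpoly n s + K1poly n :=
    (continuous_Qpoly n).add continuous_const
  have F_eq : ∀ x, Fpoly n x = ∫ s in (0:ℝ)..x, (Qpoly n s + K1poly n) := by
    intro x
    rw [intervalIntegral.integral_add ((continuous_Qpoly n).intervalIntegrable _ _)
      (continuous_const.intervalIntegrable _ _), intervalIntegral.integral_const]
    simp [Fpoly, mul_comm]
  have g_eq : ∀ s, Qpoly n s + K1poly n = ∫ t in s..(1/2), (t * (1 - t))^n := by
    intro s
    have := intervalIntegral.integral_add_adjacent_intervals
      (hc.intervalIntegrable 0 s (μ := volume)) (hc.intervalIntegrable s (1/2))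
    unfold K1poly Qpoly
    linarith
  have odd : ∀ s, Qpoly n (1 - s) + K1poly n = -(Qpoly n s + K1poly n) := by
    intro s
    have h := intervalIntegral.integral_comp_sub_left (a := s) (b := 1/2)
      (fun t : ℝ => (t * (1 - t))^n) 1
    rw [g_eq, g_eq, intervalIntegral.integral_symm]
    norm_num at h ⊢
    rw [← h]
    congr 1
    ext t
    ring
  have h := intervalIntegral.integral_comp_sub_left (a := η) (b := 1 - η)
    (fun s => Qpoly n s + K1poly n) 1
  simp only [odd, sub_sub_cancel, intervalIntegral.integral_neg] at h
  have h2 := intervalIntegral.integral_add_adjacent_intervals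
    (hg.intervalIntegrable 0 η (μ := volume)) (hg.intervalIntegrable η (1 - η))
  rw [F_eq, F_eq]
  linarith

lemma momPoly_half_pos (n : ℕ) : 0 < momPoly n (1/2) := by
  unfold momPoly
  refine intervalIntegral.intervalIntegral_pos_of_pos_on
    (Continuous.intervalIntegrable (by fun_prop) _ _) (fun t ht => ?_) (by norm_num)
  have h1 : 0 < t := ht.1
  have h2 : 0 < 1 - t := by linarith [ht.2]
  have : 0 < min t (1/2) := lt_min h1 (by norm_num)
  positivity

lemma momPoly_le_half (n : ℕ) {η : ℝ} (h1 : η ≤ 1/2) : momPoly n η ≤ momPoly n (1/2) := by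
  unfold momPoly
  refine intervalIntegral.integral_mono_on (by norm_num)
    (Continuous.intervalIntegrable (by fun_prop) _ _)
    (Continuous.intervalIntegrable (by fun_prop) _ _) fun t ht => ?_
  have h2 : 0 ≤ 1 - t := by linarith [ht.2]
  have h3 : 0 ≤ t := ht.1
  have : 0 ≤ (t * (1 - t))^n := by positivity
  gcongr

lemma le_momPoly (n : ℕ) {η : ℝ} (h0 : 0 ≤ η) (h1 : η ≤ 1/2) :
    2 * η * momPoly n (1/2) ≤ momPoly n η := by
  unfold momPoly
  rw [← intervalIntegral.integral_const_mul]
  refine intervalIntegral.integral_mono_on (by norm_num)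
    (Continuous.intervalIntegrable (by fun_prop) _ _)
    (Continuous.intervalIntegrable (by fun_prop) _ _) fun t ht => ?_
  have h2 : 0 ≤ 1 - t := by linarith [ht.2]
  have h3 : 0 ≤ t := ht.1
  have : 0 ≤ (t * (1 - t))^n := by positivity
  rw [min_eq_left ht.2, ← mul_assoc]
  gcongr
  refine le_min ?_ ?_ <;> nlinarith [ht.2]

/-- Monotone likelihood ratio: passing from `n` to `n+1` multiplies the weight by `t(1-t)`,
which increases on `[0,1/2]`, while `min t η / t` decreases. -/
lemma momPoly_succ_le (n : ℕ) {η : ℝ} (h0 : 0 ≤ η) (h1 : η ≤ 1/2) :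
    momPoly (n+1) η * momPoly n (1/2) ≤ momPoly n η * momPoly (n+1) (1/2) := by
  rcases h0.eq_or_lt with rfl | hpos
  · have hz : ∀ k, momPoly k 0 = 0 := by
      intro k
      unfold momPoly
      rw [intervalIntegral.integral_congr (g := fun _ => (0:ℝ))]
      · simp
      · intro t ht
        rw [uIcc_of_le (by norm_num)] at ht
        simp [min_eq_right ht.1]
    simp [hz]
  have ha := momPoly_half_pos n
  have hba := momPoly_le_half n h1
  have hlb := le_momPoly n h0 h1
  have hI : ∀ k η', momPoly k η' = ∫ t in (0:ℝ)..(1/2), min t η' * (t * (1 - t))^k :=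
    fun _ _ => rfl
  set a := momPoly n (1/2) with haa
  set b := momPoly n η with hbb
  have hb : 0 < b := lt_of_lt_of_le (by positivity) hlb
  -- the point where `a * min t η - b * t` changes sign
  set t₀ := a * η / b with ht₀
  have ht₀b : t₀ * b = a * η := by rw [ht₀]; field_simp
  have hle : t₀ ≤ 1/2 := by rw [ht₀, div_le_iff₀ hb]; linarith
  have hge : η ≤ t₀ := by rw [ht₀, le_div_iff₀ hb]; nlinarith
  have key : ∫ t in (0:ℝ)..(1/2), (a * (min t η * (t * (1 - t))^(n+1))
      - b * (min t (1/2) * (t * (1 - t))^(n+1)))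
      ≤ ∫ t in (0:ℝ)..(1/2), (t₀ * (1 - t₀)) * (a * (min t η * (t * (1 - t))^n)
      - b * (min t (1/2) * (t * (1 - t))^n)) := by
    refine intervalIntegral.integral_mono_on (by norm_num)
      (Continuous.intervalIntegrable (by fun_prop) _ _)
      (Continuous.intervalIntegrable (by fun_prop) _ _) fun t ht => ?_
    have h2 : 0 ≤ 1 - t := by linarith [ht.2]
    have h3 : 0 ≤ t := ht.1
    have hw : 0 ≤ (t * (1 - t))^n := by positivity
    rw [min_eq_left ht.2]
    have hs : (a * min t η - b * t) * (t * (1 - t) - t₀ * (1 - t₀)) ≤ 0 := by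
      have hfac : t * (1 - t) - t₀ * (1 - t₀) = (t - t₀) * (1 - t - t₀) := by ring
      have hnn : 0 ≤ 1 - t - t₀ := by linarith [ht.2]
      rw [hfac]
      rcases le_total t t₀ with h | h
      · refine mul_nonpos_of_nonneg_of_nonpos ?_
          (mul_nonpos_of_nonpos_of_nonneg (by linarith) hnn)
        rcases le_total t η with h' | h'
        · rw [min_eq_left h']; nlinarith
        · rw [min_eq_right h']; nlinarith
      · refine mul_nonpos_of_nonpos_of_nonneg ?_ (mul_nonneg (by linarith) hnn)
        rw [min_eq_right (hge.trans h)]; nlinarith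
    have := mul_nonpos_of_nonpos_of_nonneg hs hw
    rw [pow_succ]
    nlinarith
  have hi : ∀ k (η' : ℝ), IntervalIntegrable (fun t => min t η' * (t * (1 - t))^k)
      volume 0 (1/2) := fun k η' => Continuous.intervalIntegrable (by fun_prop) _ _
  rw [intervalIntegral.integral_const_mul,
    intervalIntegral.integral_sub ((hi _ _).const_mul _) ((hi _ _).const_mul _),
    intervalIntegral.integral_sub ((hi _ _).const_mul _) ((hi _ _).const_mul _)] at key
  simp only [intervalIntegral.integral_const_mul, ← hI] at key
  rw [← haa, ← hbb] at key
  nlinarith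

/-- As `n → ∞` the normalised weight `(t(1-t))ⁿ` on `[0,1/2]` concentrates at its
maximum `t = 1/2`. -/
lemma momPoly_ratio_tendsto {η : ℝ} (h1 : η ≤ 1/2) :
    Filter.Tendsto (fun n => momPoly n η / momPoly n (1/2)) Filter.atTop (nhds (2 * η)) := by
  have peak : ∀ η' : ℝ, η' ≤ 1/2 → Filter.Tendsto
      (fun n : ℕ => (∫ t in Icc (0:ℝ) (1/2), (t * (1 - t))^n)⁻¹ * momPoly n η')
      Filter.atTop (nhds η') := by
    intro η' hη'
    have h := tendsto_setIntegral_pow_smul_of_unique_maximum_of_isCompact_of_continuousOn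
      (μ := volume) (s := Icc (0:ℝ) (1/2)) (c := fun t => t * (1 - t))
      (g := fun t => min t η') (x₀ := 1/2) isCompact_Icc (by fun_prop)
      (fun y hy hne => by
        have : y < 1/2 := lt_of_le_of_ne hy.2 hne
        nlinarith [mul_pos (sub_pos.2 this) (sub_pos.2 this)])
      (fun t ht => mul_nonneg ht.1 (by linarith [ht.2])) (by norm_num)
      (by rw [interior_Icc, closure_Ioo (by norm_num)]; norm_num) (by fun_prop)
    rw [min_eq_right hη'] at h
    refine h.congr fun n => ?_
    rw [momPoly, intervalIntegral.integral_of_le (by norm_num),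
      ← integral_Icc_eq_integral_Ioc]
    simp [smul_eq_mul, mul_comm]
  have h := (peak η h1).div (peak (1/2) le_rfl) (by norm_num)
  have e : η / (1/2) = 2 * η := by ring
  rw [e] at h
  refine h.congr fun n => ?_
  have hJ : (∫ t in Icc (0:ℝ) (1/2), (t * (1 - t))^n) ≠ 0 := by
    rw [integral_Icc_eq_integral_Ioc, ← intervalIntegral.integral_of_le (by norm_num)]
    refine (intervalIntegral.intervalIntegral_pos_of_pos_on
      (Continuous.intervalIntegrable (by fun_prop) _ _) (fun t ht => ?_) (by norm_num)).ne'
    have h1 : 0 < t := ht.1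
    have h2 : 0 < 1 - t := by linarith [ht.2]
    positivity
  simp only [Pi.div_apply]
  rw [mul_div_mul_left _ _ (inv_ne_zero hJ)]

lemma min_one_sub_le (η : ℝ) : min η (1 - η) ≤ 1/2 := by
  rcases le_total η (1/2) with h | h
  · exact (min_le_left _ _).trans h
  · exact (min_le_right _ _).trans (by linarith)

lemma CPoly_eq (n : ℕ) {η : ℝ} (h0 : 0 ≤ η) (h1 : η ≤ 1) :
    CPoly n η = momPoly n (min η (1 - η)) / momPoly n (1/2) / 2 := by
  have hF : Fpoly n η = momPoly n (min η (1 - η)) := by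
    rcases le_total η (1/2) with h | h
    · rw [min_eq_left (by linarith), Fpoly_eq_momPoly n h0 h]
    · rw [min_eq_right (by linarith), ← Fpoly_symm,
        Fpoly_eq_momPoly n (by linarith) (by linarith)]
  rw [CPoly, K2poly, hF, Fpoly_eq_momPoly n (by norm_num) le_rfl]
  ring

lemma CPoly_le_half (n : ℕ) {η : ℝ} (h0 : 0 ≤ η) (h1 : η ≤ 1) : CPoly n η ≤ 1/2 := by
  rw [CPoly_eq n h0 h1]
  have := (div_le_one (momPoly_half_pos n)).2 (momPoly_le_half n (min_one_sub_le η))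
  linarith

lemma min_le_CPoly (n : ℕ) {η : ℝ} (h0 : 0 ≤ η) (h1 : η ≤ 1) :
    min η (1 - η) ≤ CPoly n η := by
  rw [CPoly_eq n h0 h1]
  have := (le_div_iff₀ (momPoly_half_pos n)).2
    (le_momPoly n (le_min h0 (sub_nonneg.2 h1)) (min_one_sub_le η))
  linarith

lemma CPoly_succ_le (n : ℕ) {η : ℝ} (h0 : 0 ≤ η) (h1 : η ≤ 1) :
    CPoly (n+1) η ≤ CPoly n η := by
  rw [CPoly_eq n h0 h1, CPoly_eq (n+1) h0 h1]
  have := (div_le_div_iff₀ (momPoly_half_pos (n+1)) (momPoly_half_pos n)).2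
    (momPoly_succ_le n (le_min h0 (sub_nonneg.2 h1)) (min_one_sub_le η))
  linarith

lemma CPoly_tendsto {η : ℝ} (h0 : 0 ≤ η) (h1 : η ≤ 1) :
    Filter.Tendsto (fun n => CPoly n η) Filter.atTop (nhds (min η (1 - η))) := by
  have h := (momPoly_ratio_tendsto (min_one_sub_le η)).div_const 2
  rw [mul_div_cancel_left₀ _ (two_ne_zero)] at h
  exact h.congr fun n => (CPoly_eq n h0 h1).symm

/-- (Theorem 10, convergence of minimum risks to the Bayes error.) For probability densities
`p, q` on `ℝ`, the minimum risks `R_n = ∫_{p+q>0} ((p+q)/2)·C_{Poly-n}(p/(p+q))` satisfy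
`R_n ≥ R_{n+1} ≥ (1/2)·∫ min(p,q)` for all `n`, and `R_n → (1/2)·∫ min(p,q)`, the Bayes
error with equal priors. -/
theorem minimum_risks_tendsto_bayes_error (p q : ℝ → ℝ)
    (hp_meas : Measurable p) (hq_meas : Measurable q)
    (hp_nonneg : ∀ x, 0 ≤ p x) (hq_nonneg : ∀ x, 0 ≤ q x)
    (hp_int : ∫ x, p x = 1) (hq_int : ∫ x, q x = 1)
    (R : ℕ → ℝ)
    (hR : ∀ n, R n = ∫ x in {x | 0 < p x + q x},
      ((p x + q x) / 2) * CPoly n (p x / (p x + q x))) :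
    (∀ n, R n ≥ R (n + 1)) ∧
    (∀ n, R n ≥ (1/2) * ∫ x, min (p x) (q x)) ∧
    Filter.Tendsto R Filter.atTop (nhds ((1/2) * ∫ x, min (p x) (q x))) := by
  have hp : Integrable p := .of_integral_ne_zero (by simp [hp_int])
  have hq : Integrable q := .of_integral_ne_zero (by simp [hq_int])
  have hS : MeasurableSet {x | 0 < p x + q x} :=
    measurableSet_lt measurable_const (hp_meas.add hq_meas)
  set S := {x | 0 < p x + q x} with hSdef
  have hη0 : ∀ x, 0 ≤ p x / (p x + q x) := fun x =>
    div_nonneg (hp_nonneg x) (add_nonneg (hp_nonneg x) (hq_nonneg x))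
  have hη1 : ∀ x, p x / (p x + q x) ≤ 1 := fun x =>
    div_le_one_of_le₀ (by linarith [hq_nonneg x]) (add_nonneg (hp_nonneg x) (hq_nonneg x))
  have hsum : ∀ x, 0 ≤ (p x + q x) / 2 := fun x => by
    linarith [hp_nonneg x, hq_nonneg x]
  set f : ℕ → ℝ → ℝ := fun n x => ((p x + q x) / 2) * CPoly n (p x / (p x + q x)) with hf
  -- the limiting integrand
  set f₀ : ℝ → ℝ := fun x => ((p x + q x) / 2) *
    min (p x / (p x + q x)) (1 - p x / (p x + q x)) with hf₀
  have hf₀eq : ∀ x, f₀ x = (1/2) * min (p x) (q x) := by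
    intro x
    rcases (add_nonneg (hp_nonneg x) (hq_nonneg x)).eq_or_lt with h | h
    · have h1 : p x = 0 := by linarith [hp_nonneg x, hq_nonneg x]
      have h2 : q x = 0 := by linarith [hp_nonneg x, hq_nonneg x]
      simp [hf₀, h1, h2]
    · have e : 1 - p x / (p x + q x) = q x / (p x + q x) := by field_simp; ring
      simp only [hf₀]
      rw [e, min_div_div_right h.le]
      field_simp
  have hbayes : (1/2) * ∫ x, min (p x) (q x) = ∫ x in S, f₀ x := by
    rw [setIntegral_eq_integral_of_forall_compl_eq_zero, ← integral_const_mul]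
    · simp only [hf₀eq]
    · intro x hx
      have : p x + q x = 0 :=
        le_antisymm (not_lt.1 hx) (add_nonneg (hp_nonneg x) (hq_nonneg x))
      simp [hf₀, this]
  have hbi : Integrable (fun x => (p x + q x) / 2) (volume.restrict S) :=
    ((hp.add hq).div_const 2).restrict
  have hmeas : ∀ n, AEStronglyMeasurable (f n) (volume.restrict S) := fun n =>
    (((hp_meas.add hq_meas).div_const 2).mul ((continuous_CPoly n).measurable.comp
      (hp_meas.div (hp_meas.add hq_meas)))).aestronglyMeasurable
  have hbd : ∀ n x, ‖f n x‖ ≤ (p x + q x) / 2 := by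
    intro n x
    have h1 := CPoly_le_half n (hη0 x) (hη1 x)
    have h2 : 0 ≤ CPoly n (p x / (p x + q x)) :=
      (le_min (hη0 x) (sub_nonneg.2 (hη1 x))).trans (min_le_CPoly n (hη0 x) (hη1 x))
    rw [Real.norm_of_nonneg (mul_nonneg (hsum x) h2)]
    exact mul_le_of_le_one_right (hsum x) (by linarith)
  have hint : ∀ n, Integrable (f n) (volume.restrict S) := fun n =>
    hbi.mono' (hmeas n) (.of_forall (hbd n))
  have hint₀ : Integrable f₀ (volume.restrict S) := by
    simp only [funext hf₀eq]
    exact ((hp.inf hq).const_mul (1/2)).restrict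
  refine ⟨fun n => ?_, fun n => ?_, ?_⟩
  · rw [hR, hR]
    exact integral_mono (hint (n+1)) (hint n) fun x =>
      mul_le_mul_of_nonneg_left (CPoly_succ_le n (hη0 x) (hη1 x)) (hsum x)
  · rw [hR, hbayes]
    exact integral_mono hint₀ (hint n) fun x =>
      mul_le_mul_of_nonneg_left (min_le_CPoly n (hη0 x) (hη1 x)) (hsum x)
  · rw [hbayes, funext hR]
    exact tendsto_integral_of_dominated_convergence _ hmeas hbi
      (fun n => .of_forall (hbd n))
      (.of_forall fun x => (CPoly_tendsto (hη0 x) (hη1 x)).const_mul _)
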